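/- arXiv:1409.3702 — 2 statements merged into one kernel-verified Lean document; each statement's English description precedes it below -/
import Mathlib

section
/- Let G be a countable directed graph, F : E → ℝ a function and β ∈ ℝ. For every A(β)-harmonic vector ψ ∈ [0,∞)^V there exists a Borel measure m on the space P(G) of infinite paths such that m(Z′(μ)) = e^{−βF(μ)} ψ_{r(μ)} for every finite path μ of length ≥ 1 and m(Z′(v)) = ψ_v for every vertex v; moreover m is the unique Borel measure on P(G) with these values on all cylinder sets. -/
open scoped ENNReal NNReal Classical
open Filter MeasureTheory

/-- A countable directed graph: countable sets of vertices and edges with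
source and range maps. -/
structure DirGraph where
  V : Type
  E : Type
  countV : Countable V
  countE : Countable E
  s : E → V
  r : E → V

namespace DirGraph

attribute [instance] countV countE

variable (G : DirGraph)

/-- `μ` is a finite path (a vertex counts as the empty path). -/
def IsPath (μ : List G.E) : Prop := μ.Chain' (fun e f => G.r e = G.s f)

/-- `μ` is a finite path from `u` to `w`. -/
def IsPathFrom (μ : List G.E) (u w : G.V) : Prop :=
  G.IsPath μ ∧ (∀ e ∈ μ.head?, G.s e = u) ∧ (∀ e ∈ μ.getLast?, G.r e = w) ∧ (μ = [] → u = w)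

/-- A function `F : E → ℝ` extended to finite paths. -/
def Fsum (F : G.E → ℝ) (μ : List G.E) : ℝ := (μ.map F).sum

/-- The matrix `A(β)` over the vertices, with entries in `[0,∞]`:
`A(β)_{uw} = Σ_{e : u → w} e^{-β F(e)}`. -/
noncomputable def Amat (F : G.E → ℝ) (β : ℝ) (u w : G.V) : ℝ≥0∞ :=
  ∑' e : {e : G.E // G.s e = u ∧ G.r e = w}, ENNReal.ofReal (Real.exp (-β * F e.1))

/-- The powers of the matrix `A(β)`, defined recursively; `A(β)⁰` is the identity matrix. -/
noncomputable def Apow (F : G.E → ℝ) (β : ℝ) : ℕ → G.V → G.V → ℝ≥0∞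
  | 0, u, w => if u = w then 1 else 0
  | n + 1, u, w => ∑' x : G.V, G.Amat F β u x * Apow F β n x w

/-- A sink is a vertex emitting no edges. -/
def IsSink (v : G.V) : Prop := ∀ e : G.E, G.s e ≠ v

/-- An infinite emitter is a vertex emitting infinitely many edges. -/
def InfEmitter (v : G.V) : Prop := {e : G.E | G.s e = v}.Infinite

/-- A set of vertices is hereditary when it is closed under following edges. -/
def Hereditary (H : Set G.V) : Prop := ∀ e : G.E, G.s e ∈ H → G.r e ∈ H

/-- A set of vertices `H` is saturated when every vertex of `V ∖ V∞` all of whose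
successors lie in `H` belongs to `H`. -/
def Saturated (H : Set G.V) : Prop :=
  ∀ v : G.V, ¬ G.IsSink v → ¬ G.InfEmitter v → (∀ e : G.E, G.s e = v → G.r e ∈ H) → v ∈ H

/-- `G` is cofinal when the only nonempty hereditary and saturated set of
vertices is the whole vertex set. -/
def Cofinal : Prop :=
  ∀ H : Set G.V, H.Nonempty → G.Hereditary H → G.Saturated H → H = Set.univ

/-- The set of non-wandering vertices: those lying on a loop of length ≥ 1. -/
def NW : Set G.V := {v | ∃ μ : List G.E, μ ≠ [] ∧ G.IsPathFrom μ v v}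

/-- `G` is strongly connected when there is a finite path between any two vertices. -/
def StronglyConnected : Prop := ∀ u w : G.V, ∃ μ : List G.E, G.IsPathFrom μ u w

/-- `G` is row-finite when every vertex emits only finitely many edges. -/
def RowFinite : Prop := ∀ v : G.V, {e : G.E | G.s e = v}.Finite

/-- `ψ` is an `A(β)`-harmonic vector. -/
def Harmonic (F : G.E → ℝ) (β : ℝ) (ψ : G.V → ℝ≥0) : Prop :=
  ∀ v : G.V, ∑' w : G.V, G.Amat F β v w * ψ w = (ψ v : ℝ≥0∞)

/-- `A(β)` is transient when `Σ_n A(β)ⁿ_{vv} < ∞` for every vertex. -/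
def Transient (F : G.E → ℝ) (β : ℝ) : Prop :=
  ∀ v : G.V, ∑' n : ℕ, G.Apow F β n v v ≠ ⊤

/-- `A(β)` is recurrent when `Σ_n A(β)ⁿ_{vv} = ∞` for some vertex. -/
def Recurrent (F : G.E → ℝ) (β : ℝ) : Prop :=
  ∃ v : G.V, ∑' n : ℕ, G.Apow F β n v v = ⊤

/-- An exit path: a sequence of vertices joined by edges which leaves every
finite set of vertices. -/
def IsExitPath (t : ℕ → G.V) : Prop :=
  (∀ i : ℕ, ∃ e : G.E, G.s e = t i ∧ G.r e = t (i + 1)) ∧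
  ∀ M : Set G.V, M.Finite → ∃ N : ℕ, ∀ i : ℕ, N ≤ i → t i ∉ M

/-- Tail equivalence of vertex sequences. -/
def TailEquiv (t t' : ℕ → G.V) : Prop :=
  ∃ k : ℤ, ∃ N : ℕ, ∀ i : ℕ, N ≤ i → 0 ≤ (i : ℤ) + k ∧ t ((i : ℤ) + k).toNat = t' i

/-- A simple loop based at `v`: a loop which returns to `v` only at the very end. -/
def IsSimpleLoop (v : G.V) (μ : List G.E) : Prop :=
  μ ≠ [] ∧ G.IsPathFrom μ v v ∧
  ∀ (i : ℕ) (h : i + 1 < μ.length), G.r (μ.get ⟨i, Nat.lt_of_succ_lt h⟩) ≠ v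

/-- `lⁿ_{vv}(β)`: the weighted number of simple loops of length `n` based at `v`. -/
noncomputable def loopSum (F : G.E → ℝ) (β : ℝ) (v : G.V) (n : ℕ) : ℝ≥0∞ :=
  ∑' μ : {μ : List G.E // μ.length = n ∧ G.IsSimpleLoop v μ},
    ENNReal.ofReal (Real.exp (-β * G.Fsum F μ.1))

/-- The space `P(G)` of infinite paths in `G`. -/
def PathSpace : Type := {p : ℕ → G.E // ∀ i : ℕ, G.r (p i) = G.s (p (i + 1))}

/-- The Borel σ-algebra of `P(G)` as a subspace of the product `E^ℕ` with `E`
discrete (for a countable discrete space, the Borel σ-algebra is the power set). -/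
instance : MeasurableSpace G.PathSpace :=
  letI : MeasurableSpace G.E := ⊤
  inferInstanceAs (MeasurableSpace {p : ℕ → G.E // ∀ i : ℕ, G.r (p i) = G.s (p (i + 1))})

/-- The cylinder set `Z'(v)` of infinite paths starting at the vertex `v`. -/
def cylV (v : G.V) : Set G.PathSpace := {p | G.s (p.1 0) = v}

/-- The cylinder set `Z'(μ)` of infinite paths beginning with the finite path `μ`. -/
def cylP (μ : List G.E) : Set G.PathSpace :=
  {p | ∀ (i : ℕ) (h : i < μ.length), p.1 i = μ.get ⟨i, h⟩}

/-- The set `P(G)_wan` of wandering infinite paths: those visiting each vertex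
only finitely many times. -/
def wanSet : Set G.PathSpace := {p | ∀ v : G.V, {i : ℕ | G.s (p.1 i) = v}.Finite}

end DirGraph

/-!
Finite paths form a tree, and `w μ = e^{-βF(μ)} ψ_{r(μ)}` is a weight on it such that every node
carries the total weight of its children: this is exactly harmonicity of `ψ`. Normalising the
weights of the children of each node gives transition probabilities depending on the whole past,
and the Ionescu-Tulcea theorem turns these, together with the weights of the edges as initial
weights, into a measure on `E^ℕ` whose cylinders have measure `w`. Words which are not paths have
weight zero, so the measure is carried by `P(G)`. Uniqueness is the `π`-`λ` theorem for cylinders,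
since the countably many cylinders of length one have finite measure and cover `E^ℕ`.
-/

open ProbabilityTheory Preorder

section Sequences

variable {α : Type*}

theorem exists_map_range_eq {l : List α} (hl : l ≠ []) :
    ∃ p : ℕ → α, (List.range l.length).map p = l :=
  ⟨fun i => l.getD i (l.head hl), List.ext_getElem (by simp) fun i _ hi => by simp [hi]⟩

theorem exists_pmf_mul_eq [Nonempty α] {f : α → ℝ≥0∞} (hf : ∑' a, f a ≠ ∞) :
    ∃ P : PMF α, ∀ a, (∑' b, f b) * P a = f a := by
  by_cases hzero : ∑' a, f a = 0
  · exact ⟨PMF.pure (Classical.arbitrary α), fun a => by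
      rw [hzero, zero_mul, ENNReal.tsum_eq_zero.1 hzero a]⟩
  · exact ⟨PMF.normalize f hzero hf, fun a => by
      rw [PMF.normalize_apply, mul_comm, mul_assoc, ENNReal.inv_mul_cancel hzero hf, mul_one]⟩

theorem cylinder_succ_eq_preimage_frestrictLe (p : ℕ → α) (n : ℕ) :
    PiNat.cylinder (E := fun _ => α) p (n + 1) =
      frestrictLe (π := fun _ => α) n ⁻¹' {frestrictLe n p} := by
  ext x
  simp [funext_iff]

theorem cylinder_succ_eq_inter (p : ℕ → α) (n : ℕ) :
    PiNat.cylinder (E := fun _ => α) p (n + 1) = PiNat.cylinder p n ∩ {x | x n = p n} := by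
  ext x
  exact Nat.forall_lt_succ_right

theorem cylinder_inter_cylinder_of_mem {x p q : ℕ → α} {m n : ℕ}
    (hp : x ∈ PiNat.cylinder (E := fun _ => α) p m)
    (hq : x ∈ PiNat.cylinder (E := fun _ => α) q n) :
    PiNat.cylinder (E := fun _ => α) p m ∩ PiNat.cylinder q n = PiNat.cylinder x (max m n) := by
  rw [← PiNat.mem_cylinder_iff_eq.1 hp, ← PiNat.mem_cylinder_iff_eq.1 hq]
  ext y
  simp [or_imp, forall_and]

theorem isPiSystem_cylinder_succ :
    IsPiSystem {s | ∃ (p : ℕ → α) (n : ℕ), s = PiNat.cylinder (E := fun _ => α) p (n + 1)} := by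
  rintro _ ⟨p, m, rfl⟩ _ ⟨q, n, rfl⟩ ⟨x, hp, hq⟩
  exact ⟨x, max m n, by rw [cylinder_inter_cylinder_of_mem hp hq, Nat.succ_max_succ]⟩

theorem isTopologicalBasis_cylinder_succ [TopologicalSpace α] [DiscreteTopology α] :
    TopologicalSpace.IsTopologicalBasis
      {s | ∃ (p : ℕ → α) (n : ℕ), s = PiNat.cylinder (E := fun _ => α) p (n + 1)} := by
  refine TopologicalSpace.isTopologicalBasis_of_isOpen_of_nhds ?_ fun p u hp hu => ?_
  · rintro _ ⟨p, n, rfl⟩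
    exact PiNat.isOpen_cylinder _ p (n + 1)
  · obtain ⟨_, ⟨q, n, rfl⟩, hpq, hqu⟩ :=
      (PiNat.isTopologicalBasis_cylinders fun _ => α).exists_subset_of_mem_open hp hu
    refine ⟨_, ⟨p, n, rfl⟩, PiNat.self_mem_cylinder p (n + 1), ?_⟩
    rw [← PiNat.mem_cylinder_iff_eq.1 hpq] at hqu
    exact (PiNat.cylinder_anti p n.le_succ).trans hqu

/-- A weight on the tree of nonempty words such that every word carries the total weight of its
one-letter extensions. The empty word is excluded because the total weight of the one-letter words
may be infinite. -/
structure IsTreeWeight (w : List α → ℝ≥0∞) : Prop where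
  singleton_ne_top : ∀ a, w [a] ≠ ∞
  tsum_append_singleton : ∀ l ≠ [], ∑' a, w (l ++ [a]) = w l

theorem IsTreeWeight.ne_top {w : List α → ℝ≥0∞} (hw : IsTreeWeight w) {l : List α}
    (hl : l ≠ []) : w l ≠ ∞ := by
  induction l using List.reverseRecOn with
  | nil => exact absurd rfl hl
  | append_singleton l a ih =>
    rcases eq_or_ne l [] with rfl | hne
    · exact hw.singleton_ne_top a
    · refine ne_top_of_le_ne_top (ih hne) ?_
      rw [← hw.tsum_append_singleton l hne]
      exact ENNReal.le_tsum a

variable [Countable α]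

theorem countable_range_cylinder_one :
    (Set.range fun p : ℕ → α => PiNat.cylinder (E := fun _ => α) p 1).Countable := by
  have hsub : (Set.range fun p : ℕ → α => PiNat.cylinder (E := fun _ => α) p 1) ⊆
      Set.range fun a : α => {x : ℕ → α | x 0 = a} := by
    rintro _ ⟨p, rfl⟩
    exact ⟨p 0, by ext; simp⟩
  exact (Set.countable_range _).mono hsub

variable [MeasurableSpace α]

theorem measure_null_of_forall_cylinder_null {M : Measure (ℕ → α)} {S : Set (ℕ → α)}
    (h : ∀ p ∈ S, ∃ n, M (PiNat.cylinder p n) = 0) : M S = 0 := by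
  let : TopologicalSpace α := ⊥
  have : DiscreteTopology α := ⟨rfl⟩
  refine measure_null_of_locally_null S fun p hp => ?_
  obtain ⟨n, hn⟩ := h p hp
  exact ⟨_, mem_nhdsWithin_of_mem_nhds ((PiNat.isOpen_cylinder _ p n).mem_nhds
    (PiNat.self_mem_cylinder p n)), hn⟩

variable [DiscreteMeasurableSpace α]

theorem generateFrom_cylinder_succ :
    (inferInstance : MeasurableSpace (ℕ → α)) = .generateFrom
      {s | ∃ (p : ℕ → α) (n : ℕ), s = PiNat.cylinder (E := fun _ => α) p (n + 1)} := by
  let : TopologicalSpace α := ⊥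
  have : DiscreteTopology α := ⟨rfl⟩
  exact BorelSpace.measurable_eq.trans isTopologicalBasis_cylinder_succ.borel_eq_generateFrom

theorem measurableSet_cylinder_succ (p : ℕ → α) (n : ℕ) :
    MeasurableSet (PiNat.cylinder (E := fun _ => α) p (n + 1)) := by
  rw [cylinder_succ_eq_preimage_frestrictLe]
  exact measurable_frestrictLe n (measurableSet_singleton _)

theorem measure_ext_of_cylinder_succ {M M' : Measure (ℕ → α)}
    (hfin : ∀ p, M (PiNat.cylinder p 1) ≠ ∞)
    (h : ∀ p n, M (PiNat.cylinder p (n + 1)) = M' (PiNat.cylinder p (n + 1))) : M = M' := by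
  refine Measure.ext_of_generateFrom_of_cover_subset generateFrom_cylinder_succ
    isPiSystem_cylinder_succ ?_ countable_range_cylinder_one ?_ ?_ ?_
  · rintro _ ⟨p, rfl⟩
    exact ⟨p, 0, rfl⟩
  · exact Set.eq_univ_of_forall fun p => ⟨_, ⟨p, rfl⟩, PiNat.self_mem_cylinder p 1⟩
  · rintro _ ⟨p, rfl⟩
    exact hfin p
  · rintro _ ⟨p, n, rfl⟩
    exact h p n

/-- The transition kernel from time `n` to time `n + 1` of a process whose next state, given that
the states visited so far form the list `l`, has law `P l`. -/
noncomputable def historyKernel (P : List α → PMF α) (n : ℕ) :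
    Kernel ((i : Finset.Iic n) → (fun _ : ℕ => α) i) α :=
  Kernel.ofFunOfCountable fun x =>
    (P (List.ofFn fun i : Fin (n + 1) => x ⟨i, Finset.mem_Iic.2 i.is_le⟩)).toMeasure

instance (P : List α → PMF α) (n : ℕ) : IsMarkovKernel (historyKernel P n) :=
  ⟨fun _ => PMF.toMeasure.isProbabilityMeasure _⟩

theorem historyKernel_frestrictLe (P : List α → PMF α) (n : ℕ) (p : ℕ → α) :
    historyKernel P n (frestrictLe n p) = (P ((List.range (n + 1)).map p)).toMeasure := by
  have hlist : (List.ofFn fun i : Fin (n + 1) => p i) = (List.range (n + 1)).map p :=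
    List.ext_getElem (by simp) fun i _ _ => by
      rw [List.getElem_ofFn, List.getElem_map, List.getElem_range]
  rw [← hlist]
  rfl

theorem traj_historyKernel_cylinder_one (P : List α → PMF α) (a : α) (p : ℕ → α) :
    Kernel.traj (X := fun _ => α) (historyKernel P) 0 (fun _ => a) (PiNat.cylinder p 1) =
      if a = p 0 then 1 else 0 := by
  have hrestrict : (fun _ => a) = frestrictLe (π := fun _ => α) 0 p ↔ a = p 0 := by
    simp [funext_iff]
  rw [cylinder_succ_eq_preimage_frestrictLe,
    ← Measure.map_apply (measurable_frestrictLe 0) (measurableSet_singleton _),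
    Kernel.traj_map_frestrictLe_apply, Kernel.partialTraj_self, Kernel.id_apply,
    Measure.dirac_apply' _ (measurableSet_singleton _)]
  simp [Set.indicator_apply, hrestrict]

theorem traj_historyKernel_cylinder_succ (P : List α → PMF α) (a : α) (p : ℕ → α) (n : ℕ) :
    Kernel.traj (X := fun _ => α) (historyKernel P) 0 (fun _ => a) (PiNat.cylinder p (n + 2)) =
      Kernel.traj (X := fun _ => α) (historyKernel P) 0 (fun _ => a) (PiNat.cylinder p (n + 1)) *
        P ((List.range (n + 1)).map p) (p (n + 1)) := by
  have hpreimage : PiNat.cylinder (E := fun _ => α) p (n + 2) =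
      (fun x => (frestrictLe (π := fun _ => α) n x, x (n + 1))) ⁻¹'
        ({frestrictLe n p} ×ˢ {p (n + 1)}) := by
    rw [cylinder_succ_eq_inter, cylinder_succ_eq_preimage_frestrictLe]
    rfl
  rw [hpreimage, ← Measure.map_apply (by fun_prop) (.of_discrete),
    ← Kernel.partialTraj_compProd_eq_map_traj n.zero_le,
    Measure.compProd_apply_prod (measurableSet_singleton _) (measurableSet_singleton _),
    lintegral_singleton, historyKernel_frestrictLe,
    PMF.toMeasure_apply_singleton _ _ (measurableSet_singleton _),
    ← Kernel.traj_map_frestrictLe_apply,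
    Measure.map_apply (measurable_frestrictLe n) (measurableSet_singleton _),
    ← cylinder_succ_eq_preimage_frestrictLe, mul_comm]

theorem exists_measure_cylinder_of_transition (w : α → ℝ≥0∞) (P : List α → PMF α) :
    ∃ M : Measure (ℕ → α), (∀ p, M (PiNat.cylinder p 1) = w (p 0)) ∧
      ∀ p n, M (PiNat.cylinder p (n + 2)) =
        M (PiNat.cylinder p (n + 1)) * P ((List.range (n + 1)).map p) (p (n + 1)) := by
  refine ⟨Measure.sum fun a =>
    w a • Kernel.traj (X := fun _ => α) (historyKernel P) 0 (fun _ => a),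
    fun p => ?_, fun p n => ?_⟩
  · have hmeas := measurableSet_cylinder_succ p 0
    rw [zero_add] at hmeas
    simp only [Measure.sum_apply _ hmeas, Measure.smul_apply,
      traj_historyKernel_cylinder_one, smul_eq_mul, mul_ite, mul_one, mul_zero]
    exact tsum_ite_eq (p 0) w
  · simp only [Measure.sum_apply _ (measurableSet_cylinder_succ _ _), Measure.smul_apply,
      traj_historyKernel_cylinder_succ, smul_eq_mul, ← mul_assoc, ENNReal.tsum_mul_right]

theorem IsTreeWeight.exists_measure_cylinder_eq {w : List α → ℝ≥0∞} (hw : IsTreeWeight w) :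
    ∃ M : Measure (ℕ → α), ∀ p n,
      M (PiNat.cylinder p (n + 1)) = w ((List.range (n + 1)).map p) := by
  rcases isEmpty_or_nonempty α with _ | _
  · exact ⟨0, fun p => isEmptyElim (p 0)⟩
  have htransition : ∀ l, ∃ P : PMF α, l ≠ [] → ∀ a, w l * P a = w (l ++ [a]) := by
    intro l
    rcases eq_or_ne l [] with rfl | hne
    · exact ⟨PMF.pure (Classical.arbitrary α), fun h => absurd rfl h⟩
    · have hsum := hw.tsum_append_singleton l hne
      obtain ⟨P, hP⟩ := exists_pmf_mul_eq (hsum.trans_ne (hw.ne_top hne))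
      exact ⟨P, fun _ => hsum ▸ hP⟩
  choose P hP using htransition
  obtain ⟨M, hM_one, hM_succ⟩ := exists_measure_cylinder_of_transition (fun a => w [a]) P
  refine ⟨M, fun p n => ?_⟩
  induction n with
  | zero => exact hM_one p
  | succ n ih =>
    rw [hM_succ, ih, hP _ (by simp), List.range_succ (n := n + 1), List.map_append,
      List.map_singleton]

end Sequences

namespace DirGraph

variable {G : DirGraph}

/-- The discrete `σ`-algebra on the edges, from which the `σ`-algebra of `P(G)` is built. -/
instance : MeasurableSpace G.E := ⊤

/-- The sequence of edges of an infinite path: the inclusion of `P(G)` into `E^ℕ`. -/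
def PathSpace.edges (q : G.PathSpace) : ℕ → G.E := q.1

theorem isPath_iff_isChain {μ : List G.E} :
    G.IsPath μ ↔ μ.IsChain (fun e f => G.r e = G.s f) := Iff.rfl

theorem isPath_append_singleton {μ : List G.E} {e : G.E} :
    G.IsPath (μ ++ [e]) ↔ G.IsPath μ ∧ ∀ f ∈ μ.getLast?, G.r f = G.s e := by
  simp [isPath_iff_isChain, List.isChain_append]

theorem isPath_map_range_succ {p : ℕ → G.E} {n : ℕ} :
    G.IsPath ((List.range (n + 1)).map p) ↔ ∀ i < n, G.r (p i) = G.s (p (i + 1)) :=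
  (List.isChain_map p).trans (List.isChain_range_succ _ n)

theorem cylP_map_range (p : ℕ → G.E) (n : ℕ) :
    G.cylP ((List.range n).map p) = PathSpace.edges ⁻¹' PiNat.cylinder (E := fun _ => G.E) p n := by
  ext q
  simp [cylP, PathSpace.edges]

theorem cylP_singleton (e : G.E) : G.cylP [e] = {q | q.edges 0 = e} := by
  ext q
  simp [cylP, PathSpace.edges]

theorem cylV_eq_biUnion_cylP (v : G.V) : G.cylV v = ⋃ e ∈ G.s ⁻¹' {v}, G.cylP [e] := by
  ext q
  simp [cylV, cylP_singleton, PathSpace.edges]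

theorem pairwiseDisjoint_cylP_singleton (S : Set G.E) :
    S.PairwiseDisjoint fun e => G.cylP [e] := by
  simp only [cylP_singleton]
  exact (pairwise_disjoint_fiber (fun q : G.PathSpace => q.edges 0)).set_pairwise S

theorem range_edges :
    Set.range (PathSpace.edges (G := G)) = {p | ∀ i, G.r (p i) = G.s (p (i + 1))} :=
  Subtype.range_coe

theorem measurableEmbedding_edges : MeasurableEmbedding (PathSpace.edges (G := G)) := by
  have hmeas : MeasurableSet {p : ℕ → G.E | ∀ i, G.r (p i) = G.s (p (i + 1))} := by
    have hpair : ∀ i, Measurable fun p : ℕ → G.E => (p i, p (i + 1)) := fun i => by fun_prop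
    rw [Set.ofPred_forall]
    exact .iInter fun i => hpair i (.of_discrete (s := {e : G.E × G.E | G.r e.1 = G.s e.2}))
  exact MeasurableEmbedding.subtype_coe hmeas

theorem measurableSet_cylP_singleton (e : G.E) : MeasurableSet (G.cylP [e]) := by
  rw [cylP_singleton]
  exact (measurable_pi_apply 0).comp measurableEmbedding_edges.measurable
    (measurableSet_singleton e)

theorem measure_cylV (m : Measure G.PathSpace) (v : G.V) :
    m (G.cylV v) = ∑' e : G.s ⁻¹' {v}, m (G.cylP [e.1]) := by
  rw [cylV_eq_biUnion_cylP, measure_biUnion (Set.to_countable _)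
    (pairwiseDisjoint_cylP_singleton _) fun e _ => measurableSet_cylP_singleton e]

theorem measure_ext_of_cylP {m m' : Measure G.PathSpace} (hfin : ∀ e, m (G.cylP [e]) ≠ ∞)
    (h : ∀ μ, G.IsPath μ → μ ≠ [] → m (G.cylP μ) = m' (G.cylP μ)) : m = m' := by
  have hedges := measurableEmbedding_edges (G := G)
  suffices m.map PathSpace.edges = m'.map PathSpace.edges by
    rw [← hedges.comap_map m, this, hedges.comap_map]
  have hcyl : ∀ (m : Measure G.PathSpace) (p : ℕ → G.E) (n : ℕ),
      m.map PathSpace.edges (PiNat.cylinder p n) = m (G.cylP ((List.range n).map p)) :=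
    fun m p n => by rw [hedges.map_apply, cylP_map_range]
  refine measure_ext_of_cylinder_succ (fun p => hcyl m p 1 ▸ hfin (p 0)) fun p n => ?_
  rw [hcyl, hcyl]
  by_cases hp : G.IsPath ((List.range (n + 1)).map p)
  · exact h _ hp (by simp)
  · have hempty : G.cylP ((List.range (n + 1)).map p) = ∅ := by
      refine Set.eq_empty_of_forall_notMem fun q hq => hp (isPath_map_range_succ.2 fun i hi => ?_)
      rw [cylP_map_range] at hq
      rw [← hq i (by lia), ← hq (i + 1) (by lia)]
      exact q.2 i
    rw [hempty, measure_empty, measure_empty]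

/-- Harmonicity of `ψ` for arbitrary edge weights `c`: the mass `ψ v` is distributed over the edges
`e` emitted by `v`, each of which receives `c e * ψ (r e)`. -/
def EdgeHarmonic (c : G.E → ℝ≥0∞) (ψ : G.V → ℝ≥0∞) : Prop :=
  ∀ v, ∑' e : G.s ⁻¹' {v}, c e * ψ (G.r e) = ψ v

/-- The prescribed mass `c(e₁)⋯c(eₙ) ψ(r(eₙ))` of the cylinder of a word `e₁⋯eₙ` in the edges,
which is zero if the word is not a path. The value at the empty word is irrelevant. -/
noncomputable def pathMass (c : G.E → ℝ≥0∞) (ψ : G.V → ℝ≥0∞) (μ : List G.E) : ℝ≥0∞ :=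
  if G.IsPath μ then (μ.map c).prod * μ.getLast?.elim 0 (fun e => ψ (G.r e)) else 0

variable {c : G.E → ℝ≥0∞} {ψ : G.V → ℝ≥0∞}

theorem EdgeHarmonic.mul_ne_top (h : EdgeHarmonic c ψ) (hψ : ∀ v, ψ v ≠ ∞) (e : G.E) :
    c e * ψ (G.r e) ≠ ∞ := by
  refine ne_top_of_le_ne_top (hψ (G.s e)) ?_
  rw [← h (G.s e)]
  exact ENNReal.le_tsum (f := fun f : G.s ⁻¹' {G.s e} => c f * ψ (G.r f)) ⟨e, rfl⟩

theorem pathMass_of_isPath {μ : List G.E} (hμ : G.IsPath μ) (hne : μ ≠ []) {w : G.V}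
    (hw : ∀ e ∈ μ.getLast?, G.r e = w) : pathMass c ψ μ = (μ.map c).prod * ψ w := by
  rw [pathMass, if_pos hμ, List.getLast?_eq_some_getLast hne, Option.elim_some,
    hw _ (List.getLast?_eq_some_getLast hne)]

theorem pathMass_of_not_isPath {μ : List G.E} (hμ : ¬ G.IsPath μ) : pathMass c ψ μ = 0 :=
  if_neg hμ

theorem pathMass_singleton (e : G.E) : pathMass c ψ [e] = c e * ψ (G.r e) := by
  simp [pathMass, isPath_iff_isChain]

theorem pathMass_append_singleton {μ : List G.E} (hμ : G.IsPath μ) {v : G.V} (hne : μ ≠ [])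
    (hv : ∀ e ∈ μ.getLast?, G.r e = v) (e : G.E) :
    pathMass c ψ (μ ++ [e]) =
      (μ.map c).prod * (G.s ⁻¹' {v}).indicator (fun e => c e * ψ (G.r e)) e := by
  have hf := List.getLast?_eq_some_getLast hne
  obtain rfl := hv _ hf
  by_cases he : G.s e = G.r (μ.getLast hne)
  · simp [pathMass, isPath_append_singleton, hμ, hf, he, mul_assoc]
  · simp [pathMass, isPath_append_singleton, hf, he, Ne.symm he]

theorem EdgeHarmonic.isTreeWeight_pathMass (h : EdgeHarmonic c ψ) (hψ : ∀ v, ψ v ≠ ∞) :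
    IsTreeWeight (pathMass c ψ) where
  singleton_ne_top e := pathMass_singleton (c := c) e ▸ h.mul_ne_top hψ e
  tsum_append_singleton μ hne := by
    by_cases hμ : G.IsPath μ
    · have hlast : ∀ e ∈ μ.getLast?, G.r e = G.r (μ.getLast hne) := by
        simp [List.getLast?_eq_some_getLast hne]
      simp_rw [pathMass_append_singleton hμ hne hlast]
      rw [ENNReal.tsum_mul_left, ← tsum_subtype, h, pathMass_of_isPath hμ hne hlast]
    · simp [pathMass, isPath_append_singleton, hμ]

theorem measure_compl_range_edges_eq_zero {M : Measure (ℕ → G.E)}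
    (hM : ∀ p n, ¬ G.IsPath ((List.range (n + 1)).map p) → M (PiNat.cylinder p (n + 1)) = 0) :
    M (Set.range (PathSpace.edges (G := G)))ᶜ = 0 := by
  refine measure_null_of_forall_cylinder_null fun p hp => ?_
  have hbad : ∃ i, G.r (p i) ≠ G.s (p (i + 1)) := by
    simpa [range_edges] using hp
  obtain ⟨i, hi⟩ := hbad
  exact ⟨i + 2, hM p (i + 1) fun h => hi (isPath_map_range_succ.1 h i i.lt_succ_self)⟩

theorem EdgeHarmonic.exists_measure_cylP_eq (h : EdgeHarmonic c ψ) (hψ : ∀ v, ψ v ≠ ∞) :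
    ∃ m : Measure G.PathSpace, ∀ μ ≠ [], m (G.cylP μ) = pathMass c ψ μ := by
  obtain ⟨M, hM⟩ := (h.isTreeWeight_pathMass hψ).exists_measure_cylinder_eq
  have hnull := measure_compl_range_edges_eq_zero fun p n hp =>
    (hM p n).trans (pathMass_of_not_isPath hp)
  refine ⟨M.comap PathSpace.edges, fun μ hμ => ?_⟩
  obtain ⟨p, hp⟩ := exists_map_range_eq hμ
  obtain ⟨n, hn⟩ := Nat.exists_eq_succ_of_ne_zero (List.length_eq_zero_iff.not.2 hμ)
  rw [← hp, hn, cylP_map_range, measurableEmbedding_edges.comap_preimage,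
    measure_inter_conull hnull, hM]

/-- The weight `e^{-βF(e)}` of an edge. -/
noncomputable def edgeWeight (F : G.E → ℝ) (β : ℝ) (e : G.E) : ℝ≥0∞ :=
  ENNReal.ofReal (Real.exp (-β * F e))

theorem prod_map_edgeWeight (F : G.E → ℝ) (β : ℝ) (μ : List G.E) :
    (μ.map (edgeWeight F β)).prod = ENNReal.ofReal (Real.exp (-β * G.Fsum F μ)) := by
  induction μ with
  | nil => simp [Fsum]
  | cons e μ ih =>
    have hsum : G.Fsum F (e :: μ) = F e + G.Fsum F μ := by simp [Fsum]
    rw [List.map_cons, List.prod_cons, ih, edgeWeight, hsum, mul_add, Real.exp_add,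
      ENNReal.ofReal_mul (Real.exp_nonneg _)]

theorem tsum_Amat_mul (F : G.E → ℝ) (β : ℝ) (ψ : G.V → ℝ≥0∞) (v : G.V) :
    ∑' w, G.Amat F β v w * ψ w = ∑' e : G.s ⁻¹' {v}, edgeWeight F β e * ψ (G.r e) := by
  have hfiber : ∀ w, G.Amat F β v w * ψ w =
      ∑' e : {e : G.s ⁻¹' {v} // G.r e = w}, edgeWeight F β e * ψ (G.r e) := fun w => by
    rw [Amat, ← ENNReal.tsum_mul_right,
      ← (Equiv.subtypeSubtypeEquivSubtypeInter (fun e => G.s e = v) (fun e => G.r e = w)).tsum_eq]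
    exact tsum_congr fun e => by rw [e.2]; rfl
  simp_rw [hfiber]
  rw [← ENNReal.tsum_sigma, ← (Equiv.sigmaFiberEquiv fun e : G.s ⁻¹' {v} => G.r e).tsum_eq]
  rfl

theorem Harmonic.edgeHarmonic {F : G.E → ℝ} {β : ℝ} {ψ : G.V → ℝ≥0} (h : G.Harmonic F β ψ) :
    EdgeHarmonic (edgeWeight F β) (fun v => ψ v) :=
  fun v => (tsum_Amat_mul F β (fun v => ψ v) v).symm.trans (h v)

end DirGraph

theorem stmt_9_general (G : DirGraph) (c : G.E → ℝ≥0∞) (ψ : G.V → ℝ≥0∞) (hfin : ∀ v, ψ v ≠ ∞)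
    (hψ : DirGraph.EdgeHarmonic c ψ) :
    ∃! m : Measure G.PathSpace,
      (∀ μ : List G.E, G.IsPath μ → μ ≠ [] → ∀ w : G.V, (∀ e ∈ μ.getLast?, G.r e = w) →
        m (G.cylP μ) = (μ.map c).prod * ψ w) ∧
      (∀ v : G.V, m (G.cylV v) = ψ v) := by
  obtain ⟨m, hm⟩ := hψ.exists_measure_cylP_eq hfin
  refine ⟨m, ⟨fun μ hμ hne w hw => ?_, fun v => ?_⟩, fun m' hm' => ?_⟩
  · rw [hm μ hne, DirGraph.pathMass_of_isPath hμ hne hw]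
  · simp_rw [DirGraph.measure_cylV, hm [_] (List.cons_ne_nil _ _), DirGraph.pathMass_singleton]
    exact hψ v
  · refine (DirGraph.measure_ext_of_cylP (fun e => ?_) fun μ hμ hne => ?_).symm
    · rw [hm [e] (List.cons_ne_nil _ _), DirGraph.pathMass_singleton]
      exact hψ.mul_ne_top hfin e
    · rw [hm μ hne]
      exact (DirGraph.pathMass_of_isPath hμ hne (w := G.r (μ.getLast hne))
        (by simp [List.getLast?_eq_some_getLast hne])).trans
        (hm'.1 μ hμ hne _ (by simp [List.getLast?_eq_some_getLast hne])).symm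

/-- an `A(β)`-harmonic vector gives rise to a unique Borel measure on
the infinite path space with the prescribed values on cylinder sets. -/
theorem stmt_9 (G : DirGraph) (F : G.E → ℝ) (β : ℝ) (ψ : G.V → ℝ≥0)
    (hψ : G.Harmonic F β ψ) :
    ∃! m : MeasureTheory.Measure G.PathSpace,
      (∀ μ : List G.E, G.IsPath μ → μ ≠ [] → ∀ w : G.V, (∀ e ∈ μ.getLast?, G.r e = w) →
        m (G.cylP μ) = ENNReal.ofReal (Real.exp (-β * G.Fsum F μ)) * ψ w) ∧
      (∀ v : G.V, m (G.cylV v) = ψ v) := by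
  simpa only [DirGraph.prod_map_edgeWeight] using
    stmt_9_general G (DirGraph.edgeWeight F β) (fun v => ψ v) (fun _ => ENNReal.coe_ne_top)
      hψ.edgeHarmonic
end

section
/- Let G be a strongly connected countable directed graph with finite Gurevich entropy h(G) which is recurrent and has a Ruette vertex v. Let G′ be the graph obtained from G by removing the unique edge e with s(e) = r(e) = v, and let A′ be the adjacency matrix of G′. Then limsup_n (1/n) log (A′)ⁿ_{vv} = h(G) and Σ_{n≥0} (A′)ⁿ_{vv} e^{−n h(G)} < ∞; that is, G′ is transient and h(G′) = h(G). -/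
open scoped ENNReal NNReal Classical
open Filter MeasureTheory

/-- The graph obtained from `G` by removing the edges which start and end at `v`. -/
def DirGraph.removeLoopsAt (G : DirGraph) (v : G.V) : DirGraph where
  V := G.V
  E := {e : G.E // ¬(G.s e = v ∧ G.r e = v)}
  countV := G.countV
  countE := letI := G.countE; inferInstance
  s := fun e => G.s e.1
  r := fun e => G.r e.1

/-!
Let `a n` be the weight of the loops of length `n` at `v` and `f n` that of the first-return loops
of length `n + 1`. Cutting a loop at its first return gives `A(y) = 1 + F(y) A(y)` for
`A(y) = ∑ a n yⁿ` and `F(y) = ∑ f n yⁿ⁺¹`, so in `[0, ∞]` one has `A(y) < ∞ ↔ F(y) < 1`. The root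
test gives `A(y) < ∞`, that is `F(y) < 1`, for `y < e⁻ʰ`, hence `F(e⁻ʰ) ≤ 1` by monotone continuity.
Removing the loop edge at `v` deletes exactly the term `f 0 * y` of `F(y)`, which makes the
inequality at `e⁻ʰ` strict: the new graph is transient there. Its growth rate is at most that of `G`
and at least that of the first-return loops of length `≥ 2`, which is `eʰ` because `v` is a Ruette
vertex.
-/

open Finset.HasAntidiagonal (antidiagonal)

theorem tsum_list_length_zero {α : Type*} (P : List α → Prop) (f : List α → ℝ≥0∞) :
    ∑' l : {l : List α // l.length = 0 ∧ P l}, f l = if P [] then f [] else 0 := by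
  have eq_nil (l : {l : List α // l.length = 0 ∧ P l}) : l.1 = [] :=
    List.length_eq_zero_iff.1 l.2.1
  split_ifs with hP
  · let nil : {l : List α // l.length = 0 ∧ P l} := ⟨[], rfl, hP⟩
    exact tsum_eq_single nil fun l hl => (hl (Subtype.ext (eq_nil l))).elim
  · have : IsEmpty {l : List α // l.length = 0 ∧ P l} := ⟨fun l => hP (eq_nil l ▸ l.2.2)⟩
    exact tsum_empty

theorem tsum_list_length_succ {α : Type*} (P : List α → Prop) (f : List α → ℝ≥0∞) (n : ℕ) :
    ∑' l : {l : List α // l.length = n + 1 ∧ P l}, f l =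
      ∑' a, ∑' l : {l : List α // l.length = n ∧ P (a :: l)}, f (a :: l) := by
  let cons : (Σ a, {l : List α // l.length = n ∧ P (a :: l)}) →
      {l : List α // l.length = n + 1 ∧ P l} :=
    fun p => ⟨p.1 :: p.2, by simp [p.2.2.1], p.2.2.2⟩
  have cons_bijective : Function.Bijective cons := by
    constructor
    · rintro ⟨a, l, _⟩ ⟨b, k, _⟩ hab
      obtain ⟨rfl, rfl⟩ := List.cons_eq_cons.1 (congrArg Subtype.val hab)
      rfl
    · rintro ⟨_ | ⟨a, l⟩, hlen, hP⟩
      · simp at hlen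
      · exact ⟨⟨a, l, by simpa using hlen, hP⟩, rfl⟩
  rw [← (Equiv.ofBijective cons cons_bijective).tsum_eq, ENNReal.tsum_sigma']
  rfl

theorem tsum_mul_tsum_eq_tsum_sum_antidiagonal_ennreal (f g : ℕ → ℝ≥0∞) :
    (∑' n, f n) * ∑' n, g n = ∑' n, ∑ p ∈ antidiagonal n, f p.1 * g p.2 := by
  simp_rw [← ENNReal.tsum_mul_right, ← ENNReal.tsum_mul_left]
  rw [← ENNReal.tsum_prod (f := fun i j => f i * g j),
    ← Finset.HasAntidiagonal.sigmaAntidiagonalEquivProd.tsum_eq, ENNReal.tsum_sigma']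
  refine tsum_congr fun n => ?_
  rw [tsum_fintype]
  exact Finset.sum_coe_sort (antidiagonal n) fun p => f p.1 * g p.2

theorem tsum_ne_top_of_limsup_rpow_inv_lt_one {c : ℕ → ℝ≥0∞} (hc : ∀ n, c n ≠ ⊤)
    (hlim : limsup (fun n : ℕ => c n ^ (n : ℝ)⁻¹) atTop < 1) : ∑' n, c n ≠ ⊤ := by
  obtain ⟨q, hlimq, hq⟩ := exists_between hlim
  obtain ⟨N, hN⟩ := eventually_atTop.1
    ((eventually_lt_of_limsup_lt hlimq).and (eventually_gt_atTop 0))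
  have geometric_bound : ∀ n, c (n + N) ≤ q ^ n := fun n => by
    obtain ⟨hroot, hpos⟩ := hN (n + N) (Nat.le_add_left N n)
    have hpos' : (0 : ℝ) < (n + N : ℕ) := by exact_mod_cast hpos
    calc c (n + N) ≤ q ^ ((n + N : ℕ) : ℝ) := (ENNReal.rpow_inv_le_iff hpos').1 hroot.le
      _ = q ^ (n + N) := ENNReal.rpow_natCast q _
      _ ≤ q ^ n := pow_le_pow_right_of_le_one' hq.le (Nat.le_add_right n N)
  have tail_ne_top : ∑' n, c (n + N) ≠ ⊤ := by
    refine ne_top_of_le_ne_top ?_ (ENNReal.tsum_le_tsum geometric_bound)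
    rw [ENNReal.tsum_geometric]
    exact ENNReal.inv_ne_top.2 (tsub_pos_of_lt hq).ne'
  rw [← Summable.sum_add_tsum_nat_add' (k := N) ENNReal.summable]
  exact ENNReal.add_ne_top.2 ⟨ENNReal.sum_ne_top.2 fun n _ => hc n, tail_ne_top⟩

theorem tsum_mul_pow_ne_top_of_lt_inv_limsup {a : ℕ → ℝ≥0∞} (ha : ∀ n, a n ≠ ⊤) {y : ℝ≥0∞}
    (hy : y < (limsup (fun n : ℕ => a n ^ (n : ℝ)⁻¹) atTop)⁻¹) : ∑' n, a n * y ^ n ≠ ⊤ := by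
  have hy_top : y ≠ ⊤ := hy.ne_top
  refine tsum_ne_top_of_limsup_rpow_inv_lt_one
    (fun n => ENNReal.mul_ne_top (ha n) (ENNReal.pow_ne_top hy_top)) ?_
  have root_mul_pow : (fun n : ℕ => (a n * y ^ n) ^ (n : ℝ)⁻¹) =ᶠ[atTop]
      fun n : ℕ => y * a n ^ (n : ℝ)⁻¹ := by
    filter_upwards [eventually_ne_atTop 0] with n hn
    rw [ENNReal.mul_rpow_of_nonneg _ _ (by positivity), ENNReal.pow_rpow_inv_natCast hn, mul_comm]
  rw [limsup_congr root_mul_pow, ENNReal.limsup_const_mul_of_ne_top hy_top]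
  exact ENNReal.mul_lt_of_lt_div (by rwa [one_div])

theorem tsum_mul_pow_le_of_forall_lt {ι : Type*} {c : ι → ℝ≥0∞} {e : ι → ℕ} {x K : ℝ≥0∞}
    (hx : x ≠ 0) (hK : ∀ y < x, ∑' i, c i * y ^ e i ≤ K) : ∑' i, c i * x ^ e i ≤ K := by
  have : (nhdsWithin x (Set.Iio x)).NeBot :=
    nhdsLT_neBot_of_exists_lt ⟨0, pos_iff_ne_zero.2 hx⟩
  rw [ENNReal.tsum_eq_iSup_sum]
  refine iSup_le fun s => ?_
  have partial_sum_tendsto : Tendsto (fun y => ∑ i ∈ s, c i * y ^ e i)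
      (nhdsWithin x (Set.Iio x)) (nhds (∑ i ∈ s, c i * x ^ e i)) :=
    tendsto_finsetSum _ fun i _ => ENNReal.Tendsto.const_mul
      (((ENNReal.continuous_pow (e i)).tendsto x).mono_left nhdsWithin_le_nhds)
      (Or.inl (pow_ne_zero _ hx))
  refine le_of_tendsto partial_sum_tendsto ?_
  filter_upwards [self_mem_nhdsWithin] with y hy
  exact (ENNReal.sum_le_tsum s).trans (hK y hy)

/-- `a` is the renewal sequence generated by `f`. A first return takes at least one step, so indices
are shifted: `f n` is the weight of a first return at time `n + 1`. -/
structure IsRenewal (a f : ℕ → ℝ≥0∞) : Prop where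
  zero : a 0 = 1
  succ (n : ℕ) : a (n + 1) = ∑ p ∈ antidiagonal n, f p.1 * a p.2

namespace IsRenewal

variable {a a' f f' : ℕ → ℝ≥0∞} {x : ℝ≥0∞}

theorem mul_le_succ (h : IsRenewal a f) (i j : ℕ) : f i * a j ≤ a (i + j + 1) :=
  h.succ (i + j) ▸ Finset.single_le_sum (f := fun p : ℕ × ℕ => f p.1 * a p.2)
    (fun _ _ => zero_le) (Finset.HasAntidiagonal.mem_antidiagonal.2 rfl : (i, j) ∈ _)

theorem le_succ (h : IsRenewal a f) (n : ℕ) : f n ≤ a (n + 1) := by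
  simpa [h.zero] using h.mul_le_succ n 0

theorem mul_pow (h : IsRenewal a f) (y : ℝ≥0∞) :
    IsRenewal (fun n => a n * y ^ n) (fun n => f n * y ^ (n + 1)) where
  zero := by simp [h.zero]
  succ n := by
    rw [h.succ, Finset.sum_mul]
    refine Finset.sum_congr rfl fun p hp => ?_
    rw [← Finset.HasAntidiagonal.mem_antidiagonal.1 hp]
    ring

theorem tsum_eq (h : IsRenewal a f) : ∑' n, a n = 1 + (∑' n, f n) * ∑' n, a n := by
  conv_lhs => rw [tsum_eq_zero_add' ENNReal.summable, h.zero]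
  simp_rw [h.succ, tsum_mul_tsum_eq_tsum_sum_antidiagonal_ennreal]

theorem sum_range_succ_le (h : IsRenewal a f) (N : ℕ) :
    ∑ n ∈ Finset.range (N + 1), a n ≤ 1 + (∑' n, f n) * ∑ n ∈ Finset.range N, a n := by
  let b : ℕ → ℝ≥0∞ := fun n => if n ∈ Finset.range N then a n else 0
  have b_eq : ∀ n < N, b n = a n := fun n hn => if_pos (Finset.mem_range.2 hn)
  have tsum_b : ∑' n, b n = ∑ n ∈ Finset.range N, a n := by
    rw [tsum_eq_sum fun n hn => if_neg hn]
    exact Finset.sum_congr rfl fun n hn => if_pos hn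
  have term_le : ∀ n ∈ Finset.range N,
      a (n + 1) ≤ ∑ p ∈ antidiagonal n, f p.1 * b p.2 := by
    intro n hn
    rw [h.succ]
    refine Finset.sum_le_sum fun p hp => ?_
    have : p.2 < N :=
      (Finset.HasAntidiagonal.antidiagonal.snd_le hp).trans_lt (Finset.mem_range.1 hn)
    rw [b_eq p.2 this]
  calc ∑ n ∈ Finset.range (N + 1), a n
      = 1 + ∑ n ∈ Finset.range N, a (n + 1) := by rw [Finset.sum_range_succ', h.zero, add_comm]
    _ ≤ 1 + ∑' n, ∑ p ∈ antidiagonal n, f p.1 * b p.2 := by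
        gcongr
        exact (Finset.sum_le_sum term_le).trans (ENNReal.sum_le_tsum _)
    _ = 1 + (∑' n, f n) * ∑ n ∈ Finset.range N, a n := by
        rw [← tsum_mul_tsum_eq_tsum_sum_antidiagonal_ennreal, tsum_b]

theorem tsum_le_inv_one_sub (h : IsRenewal a f) (hf : ∑' n, f n < 1) :
    ∑' n, a n ≤ (1 - ∑' n, f n)⁻¹ := by
  set K := ∑' n, f n
  refine ENNReal.tsum_le_of_sum_range_le fun N => ?_
  induction N with
  | zero => simp
  | succ N ih =>
    calc ∑ n ∈ Finset.range (N + 1), a n ≤ 1 + K * ∑ n ∈ Finset.range N, a n :=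
          h.sum_range_succ_le N
      _ ≤ (1 - K) * (1 - K)⁻¹ + K * (1 - K)⁻¹ := by
          rw [ENNReal.mul_inv_cancel (tsub_pos_of_lt hf).ne'
            (ENNReal.sub_ne_top ENNReal.one_ne_top)]
          gcongr
      _ = (1 - K)⁻¹ := by rw [← add_mul, tsub_add_cancel_of_le hf.le, one_mul]

theorem tsum_ne_top_iff (h : IsRenewal a f) : ∑' n, a n ≠ ⊤ ↔ ∑' n, f n < 1 := by
  constructor
  · intro ha
    by_contra! hf
    have add_one_le : ∑' n, a n + 1 ≤ ∑' n, a n := by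
      conv_rhs => rw [h.tsum_eq, add_comm]
      gcongr
      exact le_mul_of_one_le_left' hf
    exact (ENNReal.lt_add_right ha one_ne_zero).not_ge add_one_le
  · exact fun hf => ne_top_of_le_ne_top (ENNReal.inv_ne_top.2 (tsub_pos_of_lt hf).ne')
      (h.tsum_le_inv_one_sub hf)

theorem eq_top_of_le (h : IsRenewal a f) (hf : f 0 ≠ 0) {m n : ℕ} (hmn : m ≤ n) (hm : a m = ⊤) :
    a n = ⊤ := by
  induction n, hmn using Nat.le_induction with
  | base => exact hm
  | succ n _ ih => simpa [ih, ENNReal.mul_top hf] using h.mul_le_succ 0 n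

theorem ne_top_of_limsup_rpow_inv_ne_top (h : IsRenewal a f) (hf : f 0 ≠ 0)
    (hlim : limsup (fun n : ℕ => a n ^ (n : ℝ)⁻¹) atTop ≠ ⊤) (m : ℕ) : a m ≠ ⊤ := by
  intro hm
  refine hlim ((limsup_congr ?_).trans (limsup_const ⊤))
  filter_upwards [eventually_ge_atTop m, eventually_gt_atTop 0] with n hmn hn
  rw [h.eq_top_of_le hf hmn hm, ENNReal.top_rpow_of_pos (by positivity)]

theorem tsum_mul_pow_le_one (h : IsRenewal a f) (hf : f 0 ≠ 0) (hx : x ≠ 0)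
    (hlim : limsup (fun n : ℕ => a n ^ (n : ℝ)⁻¹) atTop ≤ x⁻¹) :
    ∑' n, f n * x ^ (n + 1) ≤ 1 := by
  refine tsum_mul_pow_le_of_forall_lt hx fun y hy => ((h.mul_pow y).tsum_ne_top_iff.1 ?_).le
  have a_ne_top := h.ne_top_of_limsup_rpow_inv_ne_top hf
    (ne_top_of_le_ne_top (ENNReal.inv_ne_top.2 hx) hlim)
  exact tsum_mul_pow_ne_top_of_lt_inv_limsup a_ne_top
    (hy.trans_le (ENNReal.le_inv_iff_le_inv.1 hlim))

theorem tsum_mul_pow_ne_top_of_zero_eq_zero (h : IsRenewal a f) (h' : IsRenewal a' f')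
    (hf : f 0 ≠ 0) (hf' : f' 0 = 0) (hff' : ∀ n, f' (n + 1) = f (n + 1)) (hx : x ≠ 0)
    (hlim : limsup (fun n : ℕ => a n ^ (n : ℝ)⁻¹) atTop ≤ x⁻¹) :
    ∑' n, a' n * x ^ n ≠ ⊤ := by
  refine (h'.mul_pow x).tsum_ne_top_iff.2 ?_
  have add_tail_le : f 0 * x + ∑' n, f' n * x ^ (n + 1) ≤ 1 :=
    calc f 0 * x + ∑' n, f' n * x ^ (n + 1) = ∑' n, f n * x ^ (n + 1) := by
          rw [tsum_eq_zero_add' ENNReal.summable,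
            tsum_eq_zero_add' (f := fun n => f n * x ^ (n + 1)) ENNReal.summable]
          simp [hf', hff']
      _ ≤ 1 := h.tsum_mul_pow_le_one hf hx hlim
  calc ∑' n, f' n * x ^ (n + 1) < ∑' n, f' n * x ^ (n + 1) + f 0 * x :=
        ENNReal.lt_add_right (ne_top_of_le_ne_top ENNReal.one_ne_top
          (le_add_self.trans add_tail_le)) (mul_ne_zero hf hx)
    _ ≤ 1 := by rwa [add_comm]

end IsRenewal

namespace DirGraph

section Paths

variable (G : DirGraph) (F : G.E → ℝ) (β : ℝ)

theorem Amat_eq_tsum_ite (u w : G.V) : G.Amat F β u w =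
    ∑' e, if G.s e = u ∧ G.r e = w then ENNReal.ofReal (Real.exp (-β * F e)) else 0 :=
  (tsum_subtype {e | G.s e = u ∧ G.r e = w} fun e => ENNReal.ofReal (Real.exp (-β * F e))).trans
    (tsum_congr fun _ => Set.indicator_apply _ _ _)

theorem tsum_Amat_mul_s15 (u : G.V) (f : G.V → ℝ≥0∞) : ∑' x, G.Amat F β u x * f x =
    ∑' e, if G.s e = u then ENNReal.ofReal (Real.exp (-β * F e)) * f (G.r e) else 0 := by
  simp_rw [Amat_eq_tsum_ite, ← ENNReal.tsum_mul_right]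
  rw [ENNReal.tsum_comm]
  refine tsum_congr fun e => ?_
  rw [tsum_eq_single (G.r e) fun x hx => by simp [hx.symm]]
  simp [ite_mul]

theorem Apow_potential_one (n : ℕ) (u w : G.V) : G.Apow (fun _ => 1) β n u w =
    G.Apow (fun _ => 0) 0 n u w * ENNReal.ofReal (Real.exp (-β)) ^ n := by
  have Amat_potential_one (u x : G.V) : G.Amat (fun _ => 1) β u x =
      G.Amat (fun _ => 0) 0 u x * ENNReal.ofReal (Real.exp (-β)) := by
    simp [Amat, ENNReal.tsum_const, mul_comm]
  induction n generalizing u with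
  | zero => simp [Apow]
  | succ n ih =>
    simp only [Apow, Amat_potential_one, ih, ← ENNReal.tsum_mul_right]
    exact tsum_congr fun x => by ring

/-- The first-passage weight from `u` to `v`: the total weight of the paths of length
`n + 1` from `u` that meet `v` after their start only at their end. -/
noncomputable def firstPassage (v : G.V) : ℕ → G.V → ℝ≥0∞
  | 0, u => G.Amat F β u v
  | n + 1, u => ∑' x, G.Amat F β u x * if x = v then 0 else firstPassage v n x

theorem Apow_succ_eq_sum_firstPassage (v : G.V) (n : ℕ) (u : G.V) : G.Apow F β (n + 1) u v =
    ∑ p ∈ antidiagonal n, G.firstPassage F β v p.1 u * G.Apow F β p.2 v v := by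
  induction n generalizing u with
  | zero =>
    rw [Apow, tsum_eq_single v fun x hx => by simp [Apow, hx]]
    simp [firstPassage]
  | succ n ih =>
    have split_at_v : ∀ x, (if x = v then 0 else G.Amat F β u x * G.Apow F β (n + 1) x v) =
        ∑ p ∈ antidiagonal n, G.Amat F β u x *
          (if x = v then 0 else G.firstPassage F β v p.1 x) * G.Apow F β p.2 v v := fun x => by
      split_ifs
      · simp
      · simp only [ih, Finset.mul_sum, mul_assoc]
    calc G.Apow F β (n + 2) u v
        = G.Amat F β u v * G.Apow F β (n + 1) v v +
            ∑' x, if x = v then 0 else G.Amat F β u x * G.Apow F β (n + 1) x v :=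
          ENNReal.tsum_eq_add_tsum_ite v
      _ = G.Amat F β u v * G.Apow F β (n + 1) v v +
            ∑ p ∈ antidiagonal n, G.firstPassage F β v (p.1 + 1) u * G.Apow F β p.2 v v := by
          simp_rw [split_at_v, Summable.tsum_finsetSum fun _ _ => ENNReal.summable,
            ENNReal.tsum_mul_right, firstPassage]
      _ = ∑ p ∈ antidiagonal (n + 1), G.firstPassage F β v p.1 u * G.Apow F β p.2 v v :=
          (Finset.Nat.sum_antidiagonal_succ (n := n)
            (f := fun p => G.firstPassage F β v p.1 u * G.Apow F β p.2 v v)).symm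

theorem isRenewal_Apow (v : G.V) :
    IsRenewal (fun n => G.Apow F β n v v) (fun n => G.firstPassage F β v n v) where
  zero := if_pos rfl
  succ n := G.Apow_succ_eq_sum_firstPassage F β v n v

/-- `μ` is a path of positive length from `u` to `v` that meets `v` after its start only at its end.
For `u = v` this unfolds to `G.IsSimpleLoop v μ`. -/
def IsFirstPassage (v u : G.V) (μ : List G.E) : Prop :=
  μ ≠ [] ∧ G.IsPathFrom μ u v ∧
  ∀ (i : ℕ) (h : i + 1 < μ.length), G.r (μ.get ⟨i, Nat.lt_of_succ_lt h⟩) ≠ v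

theorem isFirstPassage_singleton {v u : G.V} {e : G.E} :
    G.IsFirstPassage v u [e] ↔ G.s e = u ∧ G.r e = v := by
  have isPath_singleton : G.IsPath [e] := List.isChain_singleton e
  simp [IsFirstPassage, IsPathFrom, isPath_singleton]

theorem isFirstPassage_cons {v u : G.V} {e : G.E} {μ : List G.E} (hμ : μ ≠ []) :
    G.IsFirstPassage v u (e :: μ) ↔
      G.s e = u ∧ G.r e ≠ v ∧ G.IsFirstPassage v (G.r e) μ := by
  obtain ⟨f, μ, rfl⟩ := List.exists_cons_of_ne_nil hμ
  have isPath_cons_cons : G.IsPath (e :: f :: μ) ↔ G.r e = G.s f ∧ G.IsPath (f :: μ) :=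
    List.isChain_cons_cons
  simp only [IsFirstPassage, IsPathFrom, isPath_cons_cons]
  rw [← Nat.and_forall_add_one]
  simp [eq_comm (a := G.r e) (b := G.s f), and_left_comm, and_assoc]

theorem tsum_isFirstPassage_cons (v u : G.V) (e : G.E) (n : ℕ) (W : List G.E → ℝ≥0∞) :
    ∑' μ : {μ : List G.E // μ.length = n + 1 ∧ G.IsFirstPassage v u (e :: μ)}, W μ =
      if G.s e = u ∧ G.r e ≠ v then
        ∑' μ : {μ : List G.E // μ.length = n + 1 ∧ G.IsFirstPassage v (G.r e) μ}, W μ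
      else 0 := by
  have cons_iff (μ : List G.E) : μ.length = n + 1 ∧ G.IsFirstPassage v u (e :: μ) ↔
      (G.s e = u ∧ G.r e ≠ v) ∧ μ.length = n + 1 ∧ G.IsFirstPassage v (G.r e) μ := by
    by_cases hμ : μ = []
    · simp [hμ]
    · rw [G.isFirstPassage_cons hμ]
      tauto
  split_ifs with he
  · exact tsum_congr_set_coe W (Set.ext fun μ => (cons_iff μ).trans (and_iff_right he))
  · have : IsEmpty {μ : List G.E // μ.length = n + 1 ∧ G.IsFirstPassage v u (e :: μ)} :=
      ⟨fun μ => he ((cons_iff μ).1 μ.2).1⟩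
    exact tsum_empty

/-- The weight `e^{-β F(μ)}` of a finite path, multiplicative along concatenation. -/
noncomputable def pathWeight (μ : List G.E) : ℝ≥0∞ := ENNReal.ofReal (Real.exp (-β * G.Fsum F μ))

theorem pathWeight_cons (e : G.E) (μ : List G.E) : G.pathWeight F β (e :: μ) =
    ENNReal.ofReal (Real.exp (-β * F e)) * G.pathWeight F β μ := by
  rw [pathWeight, pathWeight, ← ENNReal.ofReal_mul (Real.exp_nonneg _), ← Real.exp_add, ← mul_add]
  simp [Fsum]

theorem tsum_pathWeight_isFirstPassage (v : G.V) (n : ℕ) (u : G.V) :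
    ∑' μ : {μ : List G.E // μ.length = n + 1 ∧ G.IsFirstPassage v u μ}, G.pathWeight F β μ =
      G.firstPassage F β v n u := by
  have sum_over_first_edge (n : ℕ) (u : G.V) :
      ∑' μ : {μ : List G.E // μ.length = n + 1 ∧ G.IsFirstPassage v u μ}, G.pathWeight F β μ =
        ∑' e, ENNReal.ofReal (Real.exp (-β * F e)) *
          ∑' μ : {μ : List G.E // μ.length = n ∧ G.IsFirstPassage v u (e :: μ)},
            G.pathWeight F β μ := by
    simp_rw [tsum_list_length_succ _ (G.pathWeight F β), pathWeight_cons, ENNReal.tsum_mul_left]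
  induction n generalizing u with
  | zero =>
    rw [sum_over_first_edge, firstPassage, Amat_eq_tsum_ite]
    refine tsum_congr fun e => ?_
    rw [tsum_list_length_zero _ (G.pathWeight F β)]
    simp [isFirstPassage_singleton, pathWeight, Fsum]
  | succ n ih =>
    rw [sum_over_first_edge, firstPassage, tsum_Amat_mul_s15]
    refine tsum_congr fun e => ?_
    rw [G.tsum_isFirstPassage_cons v u e n (G.pathWeight F β), ih]
    by_cases hu : G.s e = u <;> by_cases hv : G.r e = v <;> simp [hu, hv]

theorem loopSum_succ (v : G.V) (n : ℕ) :
    G.loopSum F β v (n + 1) = G.firstPassage F β v n v :=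
  G.tsum_pathWeight_isFirstPassage F β v n v

end Paths

section RemoveLoops

variable (G : DirGraph) (F : G.E → ℝ) (β : ℝ) (v : G.V)

/-- The inclusion of the edges that survive the removal of the loops at `v`. A potential `F` on `G`
restricts to `F ∘ G.edgeInclusion v`. -/
def edgeInclusion : (G.removeLoopsAt v).E → G.E := Subtype.val

theorem Amat_removeLoopsAt (u w : G.V) : (G.removeLoopsAt v).Amat (F ∘ G.edgeInclusion v) β u w =
    if u = v ∧ w = v then 0 else G.Amat F β u w := by
  split_ifs with huw
  · have : IsEmpty {e : (G.removeLoopsAt v).E //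
        (G.removeLoopsAt v).s e = u ∧ (G.removeLoopsAt v).r e = w} :=
      ⟨fun e => e.1.2 ⟨e.2.1.trans huw.1, e.2.2.trans huw.2⟩⟩
    exact tsum_empty
  · exact (Equiv.subtypeSubtypeEquivSubtype fun {e} (he : G.s e = u ∧ G.r e = w)
      (hloop : G.s e = v ∧ G.r e = v) =>
      huw ⟨he.1.symm.trans hloop.1, he.2.symm.trans hloop.2⟩).tsum_eq
        fun e => ENNReal.ofReal (Real.exp (-β * F e.1))

theorem Amat_removeLoopsAt_le (u w : G.V) :
    (G.removeLoopsAt v).Amat (F ∘ G.edgeInclusion v) β u w ≤ G.Amat F β u w := by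
  rw [Amat_removeLoopsAt]
  split_ifs
  exacts [zero_le, le_rfl]

theorem Apow_removeLoopsAt_le (n : ℕ) (u w : G.V) :
    (G.removeLoopsAt v).Apow (F ∘ G.edgeInclusion v) β n u w ≤ G.Apow F β n u w := by
  induction n generalizing u with
  | zero => exact le_rfl
  | succ n ih =>
    exact ENNReal.tsum_le_tsum fun x => mul_le_mul' (G.Amat_removeLoopsAt_le F β v u x) (ih x)

theorem firstPassage_removeLoopsAt (n : ℕ) (u : G.V) :
    (G.removeLoopsAt v).firstPassage (F ∘ G.edgeInclusion v) β v n u =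
      if n = 0 ∧ u = v then 0 else G.firstPassage F β v n u := by
  induction n generalizing u with
  | zero => simpa [firstPassage] using G.Amat_removeLoopsAt F β v u v
  | succ n ih =>
    have term_eq (x : G.V) : (G.removeLoopsAt v).Amat (F ∘ G.edgeInclusion v) β u x *
          (if x = v then 0 else
            (G.removeLoopsAt v).firstPassage (F ∘ G.edgeInclusion v) β v n x) =
        G.Amat F β u x * if x = v then 0 else G.firstPassage F β v n x := by
      by_cases hx : x = v
      · simp only [hx, if_true, mul_zero]
      · simp only [Amat_removeLoopsAt, ih, hx, and_false, if_false]
    exact (tsum_congr term_eq).trans (if_neg (by simp)).symm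

end RemoveLoops

end DirGraph

theorem stmt_15_general (G : DirGraph) (F : G.E → ℝ) (β h : ℝ) (v : G.V)
    (hent : limsup (fun n : ℕ => G.Apow F β n v v ^ (n : ℝ)⁻¹) atTop =
      ENNReal.ofReal (Real.exp h))
    (hloop : G.loopSum F β v 1 ≠ 0)
    (hRuette : limsup (fun n : ℕ => G.loopSum F β v n ^ (n : ℝ)⁻¹) atTop =
      ENNReal.ofReal (Real.exp h)) :
    limsup (fun n : ℕ =>
        (G.removeLoopsAt v).Apow (F ∘ G.edgeInclusion v) β n v v ^ (n : ℝ)⁻¹) atTop =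
      ENNReal.ofReal (Real.exp h) ∧
    ∑' n : ℕ, (G.removeLoopsAt v).Apow (F ∘ G.edgeInclusion v) β n v v *
      ENNReal.ofReal (Real.exp (-h)) ^ n ≠ ⊤ := by
  have renewal := G.isRenewal_Apow F β v
  have renewal' := (G.removeLoopsAt v).isRenewal_Apow (F ∘ G.edgeInclusion v) β v
  have firstPassage_zero' : (G.removeLoopsAt v).firstPassage (F ∘ G.edgeInclusion v) β v 0 v = 0 :=
    (G.firstPassage_removeLoopsAt F β v 0 v).trans (if_pos ⟨rfl, rfl⟩)
  have firstPassage_succ' (n : ℕ) :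
      (G.removeLoopsAt v).firstPassage (F ∘ G.edgeInclusion v) β v (n + 1) v =
        G.firstPassage F β v (n + 1) v :=
    (G.firstPassage_removeLoopsAt F β v (n + 1) v).trans (if_neg (by simp))
  refine ⟨le_antisymm ?_ ?_, ?_⟩
  · exact hent ▸ limsup_le_limsup (Eventually.of_forall fun n =>
      ENNReal.rpow_le_rpow (G.Apow_removeLoopsAt_le F β v n v v) (by positivity))
  · rw [← hRuette]
    refine limsup_le_limsup (eventually_atTop.2 ⟨2, fun n hn => ?_⟩)
    obtain ⟨m, rfl⟩ := Nat.exists_eq_add_of_le' hn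
    refine ENNReal.rpow_le_rpow ?_ (by positivity)
    exact (G.loopSum_succ F β v (m + 1)).trans_le
      ((firstPassage_succ' m).symm.trans_le (renewal'.le_succ (m + 1)))
  · refine renewal.tsum_mul_pow_ne_top_of_zero_eq_zero renewal' (G.loopSum_succ F β v 0 ▸ hloop)
      firstPassage_zero' firstPassage_succ' (by simp [Real.exp_pos]) (hent.trans_le ?_)
    rw [Real.exp_neg, ENNReal.ofReal_inv_of_pos (Real.exp_pos h), inv_inv]

/-- removing the loop edge at a Ruette vertex of a recurrent graph
yields a transient graph with the same Gurevich entropy. -/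
theorem stmt_15 (G : DirGraph) (hSC : G.StronglyConnected) (h : ℝ)
    (hent : ∀ u : G.V,
      Filter.limsup (fun n : ℕ => (G.Apow (fun _ => 0) 0 n u u) ^ ((n : ℝ)⁻¹)) Filter.atTop
        = ENNReal.ofReal (Real.exp h))
    (hrec : G.Recurrent (fun _ => 1) h)
    (v : G.V)
    (hl1 : G.loopSum (fun _ => 0) 0 v 1 = 1)
    (hRuette : Filter.limsup
        (fun n : ℕ => (G.loopSum (fun _ => 0) 0 v n) ^ ((n : ℝ)⁻¹)) Filter.atTop
      = ENNReal.ofReal (Real.exp h)) :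
    (Filter.limsup
        (fun n : ℕ => ((G.removeLoopsAt v).Apow (fun _ => 0) 0 n v v) ^ ((n : ℝ)⁻¹))
        Filter.atTop = ENNReal.ofReal (Real.exp h)) ∧
    ∑' n : ℕ, (G.removeLoopsAt v).Apow (fun _ => 1) h n v v ≠ ⊤ := by
  obtain ⟨hgrowth, hsum⟩ := stmt_15_general G (fun _ => 0) 0 h v (hent v) (by simp [hl1]) hRuette
  exact ⟨hgrowth, (tsum_congr fun n =>
    (G.removeLoopsAt v).Apow_potential_one h n v v).trans_ne hsum⟩
end
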